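/- arXiv:1610.07342 — 2 statements merged into one kernel-verified Lean document; each statement's English description precedes it below -/
import Mathlib

section
/- Let φ be a smooth function of the lattice variables u_{m1},…,u_{m2} (m1 ≥ m2). Then the adjoint variational derivative δ̄φ/δ̄u_0 = Σ_{k=m2}^{m1} (−1)^k T^{−k}(∂φ/∂u_k) vanishes identically if and only if there exists a smooth function ω of finitely many lattice variables such that φ = (T+1)ω identically, i.e. φ(u_{m1},…,u_{m2}) = ω(u_{p+1},…,u_{q+1}) + ω(u_p,…,u_q) for all real sequences (u_j). -/
/-!
If `φ = (T + 1) ω`, then `∂φ/∂u_k = T (∂ω/∂u_{k-1}) + ∂ω/∂u_k`, so the `k`-th term of the adjoint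
variational derivative is `g k - g (k - 1)` with `g k = (-1)^k T^{-k} (∂ω/∂u_k)`, and the sum of
these over all `k` telescopes to zero because `g` has finite support.

For the converse an explicit `ω` is available. Consider the alternating sum
`S u = ∑_{k = m2}^{m1} (-1)^k φ (T^{m1 - k} u)`. Its derivative in `u_{m1}` is the adjoint variational
derivative of `φ` at `T^{m1} u`, so `S` does not depend on `u_{m1}` (`altSum_update`). On the other
hand `S u + S (T u)` telescopes to `(-1)^{m1} φ u + (-1)^{m2} φ (T^{m1-m2+1} u)`
(`altSum_add_shift`). Evaluate this at the sequence which agrees with `u` at the indices `m2, …, m1`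
and vanishes elsewhere: the second term becomes a constant, and, as the entry at `m1` may be replaced
by `0` in `S u`, both values of `S` are values of one function of `u_{m2}, …, u_{m1 - 1}`, taken at
`u` and at `T u`. Up to the sign `(-1)^{m1}` and half of the constant, this function is `ω`.
-/

open Finset

noncomputable section

/-- The shift operator: `(shift s u) j = u (j + s)`, so that for a lattice
function `F`, `(T^s F) u = F (shift s u)`. -/
def shift (s : ℤ) (u : ℤ → ℝ) : ℤ → ℝ := fun j => u (j + s)

/-- Partial derivative of a lattice function `φ` with respect to the lattice
variable `u_k`, evaluated at the sequence `u`. -/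
def pd (φ : (ℤ → ℝ) → ℝ) (k : ℤ) (u : ℤ → ℝ) : ℝ :=
  deriv (fun x => φ (Function.update u k x)) (u k)

/-- `φ` is a smooth function of the lattice variables `u_p, …, u_q` (q ≤ p):
it factors through a smooth function of the `p - q + 1` variables
`u_q, u_{q+1}, …, u_p`. -/
def SmoothWindow (q p : ℤ) (φ : (ℤ → ℝ) → ℝ) : Prop :=
  ∃ Φ : (Fin ((p - q).toNat + 1) → ℝ) → ℝ, ContDiff ℝ (⊤ : ℕ∞) Φ ∧
    ∀ u : ℤ → ℝ, φ u = Φ (fun i => u (q + (i.val : ℤ)))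

theorem shift_shift (s t : ℤ) (u : ℤ → ℝ) : shift s (shift t u) = shift (s + t) u := by
  funext j
  simp [shift, add_assoc]

theorem shift_update (s k : ℤ) (u : ℤ → ℝ) (x : ℝ) :
    shift s (Function.update u k x) = Function.update (shift s u) (k - s) x := by
  funext j
  by_cases h : j = k - s
  · subst h
    simp [shift]
  · have h' : j + s ≠ k := by omega
    simp [shift, h, h']

theorem SmoothWindow.congr {q p : ℤ} {φ : (ℤ → ℝ) → ℝ} (hqp : q ≤ p) (hφ : SmoothWindow q p φ)
    {u v : ℤ → ℝ} (h : ∀ j, q ≤ j → j ≤ p → u j = v j) : φ u = φ v := by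
  obtain ⟨Φ, -, hΦ⟩ := hφ
  rw [hΦ, hΦ]
  congr 1
  funext i
  have := i.isLt
  exact h _ (by omega) (by omega)

/-- A lattice function of a finite window is smooth along every family of sequences whose entries
depend smoothly on the parameter. -/
theorem SmoothWindow.contDiff_comp {E : Type*} [NormedAddCommGroup E] [NormedSpace ℝ E]
    {q p : ℤ} {φ : (ℤ → ℝ) → ℝ} (hφ : SmoothWindow q p φ)
    {L : E → ℤ → ℝ} (hL : ∀ j, ContDiff ℝ (⊤ : ℕ∞) (fun v => L v j)) :
    ContDiff ℝ (⊤ : ℕ∞) (fun v => φ (L v)) := by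
  obtain ⟨Φ, hs, hΦ⟩ := hφ
  simp only [hΦ]
  exact hs.comp (contDiff_pi.2 fun i => hL _)

theorem SmoothWindow.differentiable_update {q p : ℤ} {φ : (ℤ → ℝ) → ℝ}
    (hφ : SmoothWindow q p φ) (k : ℤ) (u : ℤ → ℝ) :
    Differentiable ℝ (fun x => φ (Function.update u k x)) := by
  refine (hφ.contDiff_comp fun j => ?_).differentiable (by simp)
  by_cases h : j = k
  · subst h
    simpa using contDiff_fun_id
  · simpa [h] using contDiff_const

theorem SmoothWindow.pd_eq_zero {q p : ℤ} {φ : (ℤ → ℝ) → ℝ} (hqp : q ≤ p)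
    (hφ : SmoothWindow q p φ) {k : ℤ} (hk : k ∉ Finset.Icc q p) (u : ℤ → ℝ) : pd φ k u = 0 := by
  have : (fun x => φ (Function.update u k x)) = fun _ => φ u := by
    funext x
    refine hφ.congr hqp fun j h1 h2 => ?_
    rw [Function.update_of_ne]
    rintro rfl
    exact hk (Finset.mem_Icc.2 ⟨h1, h2⟩)
  simp [pd, this]

theorem neg_one_zpow_pred (k : ℤ) : (-1 : ℝ) ^ (k - 1) = -(-1 : ℝ) ^ k := by
  rw [zpow_sub_one₀ (by norm_num)]
  norm_num

theorem pd_add_shift {q p : ℤ} {φ ω : (ℤ → ℝ) → ℝ} (hω : SmoothWindow q p ω)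
    (h : ∀ u, φ u = ω (shift 1 u) + ω u) (k : ℤ) (u : ℤ → ℝ) :
    pd φ k u = pd ω (k - 1) (shift 1 u) + pd ω k u := by
  have e : shift 1 u (k - 1) = u k := by simp [shift]
  simp only [pd, h, shift_update, e]
  exact deriv_fun_add (hω.differentiable_update _ _ _) (hω.differentiable_update _ _ _)

theorem sum_eq_zero_of_eq_add_shift {m1 m2 : ℤ} (hm : m2 ≤ m1) {φ ω : (ℤ → ℝ) → ℝ}
    (hφ : SmoothWindow m2 m1 φ) {q p : ℤ} (hqp : q ≤ p) (hω : SmoothWindow q p ω)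
    (h : ∀ u, φ u = ω (shift 1 u) + ω u) (u : ℤ → ℝ) :
    ∑ k ∈ Finset.Icc m2 m1, (-1 : ℝ) ^ k * pd φ k (shift (-k) u) = 0 := by
  set g : ℤ → ℝ := fun k => (-1 : ℝ) ^ k * pd ω k (shift (-k) u) with hg
  have hgs : g.support ⊆ Finset.Icc q p := by
    intro k hk
    by_contra hk'
    exact hk (by simp [hg, hω.pd_eq_zero hqp (mt Finset.mem_coe.2 hk')])
  have hfin : g.support.Finite := (Finset.finite_toSet _).subset hgs
  have hfin' : (fun k => g (k - 1)).support.Finite :=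
    hfin.preimage (f := fun k : ℤ => k - 1) (sub_left_injective.injOn)
  have hterm : ∀ k, (-1 : ℝ) ^ k * pd φ k (shift (-k) u) = g k - g (k - 1) := by
    intro k
    have e : 1 + -k = -(k - 1) := by ring
    simp only [hg, pd_add_shift hω h, shift_shift, neg_one_zpow_pred, e]
    ring
  rw [← finsum_eq_sum_of_support_subset (fun k => (-1 : ℝ) ^ k * pd φ k (shift (-k) u))]
  · simp only [hterm]
    rw [finsum_sub_distrib hfin hfin', sub_eq_zero]
    exact (finsum_comp_equiv (Equiv.subRight (1 : ℤ)) (f := g)).symm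
  · intro k hk
    by_contra hk'
    exact hk (by simp [hφ.pd_eq_zero hm (mt Finset.mem_coe.2 hk')])

/-- The alternating sum `∑_{k = m2}^{m1} (-1)^k T^{m1 - k} φ`. -/
def altSum (m2 m1 : ℤ) (φ : (ℤ → ℝ) → ℝ) (u : ℤ → ℝ) : ℝ :=
  ∑ k ∈ Finset.Icc m2 m1, (-1 : ℝ) ^ k * φ (shift (m1 - k) u)

/-- When the adjoint variational derivative of `φ` vanishes, the alternating sum does not depend on
the variable `u_{m1}`. -/
theorem altSum_update {m1 m2 : ℤ} {φ : (ℤ → ℝ) → ℝ} (hφ : SmoothWindow m2 m1 φ)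
    (h : ∀ u : ℤ → ℝ, ∑ k ∈ Finset.Icc m2 m1, (-1 : ℝ) ^ k * pd φ k (shift (-k) u) = 0)
    (u : ℤ → ℝ) (x y : ℝ) :
    altSum m2 m1 φ (Function.update u m1 x) = altSum m2 m1 φ (Function.update u m1 y) := by
  have e : ∀ k : ℤ, m1 - (m1 - k) = k := fun k => by ring
  have hd : ∀ k x, HasDerivAt (fun x => φ (shift (m1 - k) (Function.update u m1 x)))
      (pd φ k (shift (-k) (shift m1 (Function.update u m1 x)))) x := by
    intro k x
    have e' : -k + m1 = m1 - k := by ring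
    rw [shift_shift, e']
    simp only [shift_update, e, pd, Function.update_idem, Function.update_self]
    exact (hφ.differentiable_update _ _ _).hasDerivAt
  have hD : ∀ x, HasDerivAt (fun x => altSum m2 m1 φ (Function.update u m1 x)) 0 x := by
    intro x
    rw [← h (shift m1 (Function.update u m1 x))]
    exact HasDerivAt.fun_sum fun k _ => (hd k x).const_mul _
  exact is_const_of_deriv_eq_zero (fun x => (hD x).differentiableAt) (fun x => (hD x).deriv) x y

theorem sum_Icc_sub_pred (g : ℤ → ℝ) {a b : ℤ} (hab : a ≤ b) :
    ∑ k ∈ Finset.Icc a b, (g k - g (k - 1)) = g b - g (a - 1) := by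
  induction b, hab using Int.leInduction with
  | base => simp
  | succ b hb ih =>
    have : Finset.Icc a (b + 1) = insert (b + 1) (Finset.Icc a b) := by
      ext k
      simp only [Finset.mem_Icc, Finset.mem_insert]
      omega
    rw [this, Finset.sum_insert (by simp), ih]
    simp

theorem altSum_add_shift {m1 m2 : ℤ} (hm : m2 ≤ m1) (φ : (ℤ → ℝ) → ℝ) (u : ℤ → ℝ) :
    altSum m2 m1 φ (shift 1 u) + altSum m2 m1 φ u =
      (-1 : ℝ) ^ m1 * φ u + (-1 : ℝ) ^ m2 * φ (shift (m1 - m2 + 1) u) := by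
  have key := sum_Icc_sub_pred (fun k => (-1 : ℝ) ^ k * φ (shift (m1 - k) u)) hm
  have e0 : shift (m1 - m1) u = u := by
    funext j
    simp [shift]
  have e1 : ∀ k : ℤ, m1 - (k - 1) = m1 - k + 1 := fun k => by ring
  simp only [neg_one_zpow_pred, e0, e1] at key
  rw [altSum, altSum, ← Finset.sum_add_distrib]
  simp only [shift_shift]
  refine Eq.trans (Finset.sum_congr rfl fun k _ => ?_) (key.trans ?_) <;> ring

/-- The sequence with entries `v` at the indices `q, …, p - 1` and `0` elsewhere; the last entry
of `v`, which belongs to the index `p`, is dropped. -/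
def extendZero (q p : ℤ) (v : Fin ((p - q).toNat + 1) → ℝ) : ℤ → ℝ := fun j =>
  if h : q ≤ j ∧ j < p then v ⟨(j - q).toNat, by omega⟩ else 0

theorem extendZero_apply (q p : ℤ) (u : ℤ → ℝ) (j : ℤ) :
    extendZero q p (fun i => u (q + (i.val : ℤ))) j = if q ≤ j ∧ j < p then u j else 0 := by
  unfold extendZero
  split_ifs with h
  · change u (q + ((j - q).toNat : ℤ)) = u j
    congr 1
    omega
  · rfl

theorem contDiff_extendZero (q p j : ℤ) :
    ContDiff ℝ (⊤ : ℕ∞) (fun v => extendZero q p v j) := by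
  unfold extendZero
  split_ifs with h
  · exact contDiff_apply ℝ ℝ _
  · exact contDiff_const

theorem altSum_congr {m1 m2 : ℤ} (hm : m2 ≤ m1) {φ : (ℤ → ℝ) → ℝ} (hφ : SmoothWindow m2 m1 φ)
    {u v : ℤ → ℝ} (h : ∀ j, m2 ≤ j → u j = v j) : altSum m2 m1 φ u = altSum m2 m1 φ v := by
  refine Finset.sum_congr rfl fun k hk => ?_
  rw [hφ.congr hm fun j h1 _ => ?_]
  have := Finset.mem_Icc.1 hk
  exact h _ (by omega)

theorem exists_eq_add_shift {m1 m2 : ℤ} (hm : m2 ≤ m1) {φ : (ℤ → ℝ) → ℝ}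
    (hφ : SmoothWindow m2 m1 φ)
    (h : ∀ u : ℤ → ℝ, ∑ k ∈ Finset.Icc m2 m1, (-1 : ℝ) ^ k * pd φ k (shift (-k) u) = 0) :
    ∃ ω : (ℤ → ℝ) → ℝ, SmoothWindow m2 m1 ω ∧ ∀ u : ℤ → ℝ, φ u = ω (shift 1 u) + ω u := by
  set c : ℝ := (-1 : ℝ) ^ m2 * φ 0 with hc
  set Ω : (Fin ((m1 - m2).toNat + 1) → ℝ) → ℝ := fun v =>
    (-1 : ℝ) ^ m1 * (altSum m2 m1 φ (extendZero m2 m1 v) - c / 2) with hΩ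
  refine ⟨fun u => Ω fun i => u (m2 + (i.val : ℤ)), ⟨Ω, ?_, fun u => rfl⟩, fun u => ?_⟩
  · refine contDiff_const.mul (ContDiff.sub ?_ contDiff_const)
    exact ContDiff.sum fun k _ => contDiff_const.mul
      (hφ.contDiff_comp fun j => contDiff_extendZero _ _ _)
  · -- the truncation `w` makes `φ (T^{m1-m2+1} w)` constant without changing `φ u`
    set w : ℤ → ℝ := fun j => if m2 ≤ j ∧ j ≤ m1 then u j else 0 with hw
    have key := altSum_add_shift hm φ w
    have e1 : φ w = φ u := hφ.congr hm fun j h1 h2 => by simp [hw, h1, h2]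
    have e2 : φ (shift (m1 - m2 + 1) w) = φ 0 := hφ.congr hm fun j h1 _ => by
      simp only [hw, shift, Pi.zero_apply]
      exact if_neg (by omega)
    have e3 : altSum m2 m1 φ (shift 1 w) =
        altSum m2 m1 φ (extendZero m2 m1 fun i => shift 1 u (m2 + (i.val : ℤ))) := by
      refine altSum_congr hm hφ fun j hj => ?_
      rw [extendZero_apply]
      simp only [hw, shift]
      exact if_congr (by omega) rfl rfl
    have e4 : altSum m2 m1 φ w =
        altSum m2 m1 φ (extendZero m2 m1 fun i => u (m2 + (i.val : ℤ))) := by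
      -- from `m2` on, `w` and the extension by zero differ only at `m1`
      have hx : w = Function.update w m1 (w m1) := by simp
      rw [hx, altSum_update hφ h w (w m1) 0]
      refine altSum_congr hm hφ fun j hj => ?_
      rw [extendZero_apply]
      by_cases hj' : j = m1
      · subst hj'
        simp
      · rw [Function.update_of_ne hj']
        exact if_congr (by omega) rfl rfl
    have hsq : (-1 : ℝ) ^ m1 * (-1 : ℝ) ^ m1 = 1 := by
      rw [← mul_zpow]
      simp
    rw [e1, e2, e3, e4] at key
    simp only [hΩ]
    linear_combination (-(-1 : ℝ) ^ m1) * key - φ u * hsq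

/-- the adjoint variational derivative
`δ̄φ/δ̄u_0 = Σ_{k=m2}^{m1} (-1)^k T^{-k}(∂φ/∂u_k)` of a smooth lattice function `φ`
vanishes identically iff `φ = (T+1)ω` for a smooth lattice function `ω` of
finitely many lattice variables. -/
theorem adjoint_variational_derivative_kernel
    (m1 m2 : ℤ) (hm : m2 ≤ m1) (φ : (ℤ → ℝ) → ℝ) (hφ : SmoothWindow m2 m1 φ) :
    (∀ u : ℤ → ℝ, ∑ k ∈ Finset.Icc m2 m1, (-1 : ℝ) ^ k * pd φ k (shift (-k) u) = 0) ↔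
      ∃ (q p : ℤ) (ω : (ℤ → ℝ) → ℝ), q ≤ p ∧ SmoothWindow q p ω ∧
        ∀ u : ℤ → ℝ, φ u = ω (shift 1 u) + ω u := by
  refine ⟨fun h => ?_, ?_⟩
  · obtain ⟨ω, hω, e⟩ := exists_eq_add_shift hm hφ h
    exact ⟨m2, m1, ω, hm, hω, e⟩
  · rintro ⟨q, p, ω, hqp, hω, e⟩ u
    exact sum_eq_zero_of_eq_add_shift hm hφ hqp hω e u
end
end

section
/- The flow u_{n,τ} = g_n with g_0 = u_0·( S_2 + S_1 − S_{−1} − S_{−2} ), where S_0 = u_2u_0 + u_1u_0 + u_0² + u_0u_{−1} + u_0u_{−2} and S_k denotes the k-th shift of S_0, is a generalized symmetry of the Itoh–Narita–Bogoyavlensky equation (E10), u̇_n = f_n with f_0 = u_0(u_2+u_1−u_{−1}−u_{−2}); i.e. Σ_{k=−4}^{4} f_k · ∂g_0/∂u_k = Σ_{k=−2}^{2} g_k · ∂f_0/∂u_k holds identically in u_{−6},…,u_6. -/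
/-! The identity is one between polynomials in the lattice variables, so it is settled by computing
both sides. The only analytic input is the matrix of partial derivatives `∂u_j/∂u_k = δ_{jk}`
(`hasDerivAt_update_coord`); the product rule then gives every partial derivative of `fINB` and `gINB` as
an explicit polynomial with Kronecker deltas as coefficients. Substituting `k = -4, …, 4` (resp.
`-2, …, 2`) evaluates the deltas, and the two sums agree as elements of the polynomial ring in
`u_{-6}, …, u_6`. -/

open Finset

noncomputable section

/-- The compatibility condition stating that the flow `u_{n,τ} = g_n` is a
generalized symmetry of the equation `u̇_n = f_n`:
`Σ_{k=-4}^{4} f_k ∂g_0/∂u_k = Σ_{k=-2}^{2} g_k ∂f_0/∂u_k` identically on `dom`. -/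
def IsGenSymmetry (f g : (ℤ → ℝ) → ℝ) (dom : (ℤ → ℝ) → Prop) : Prop :=
  ∀ u : ℤ → ℝ, dom u →
    (∑ k ∈ Finset.Icc (-4 : ℤ) 4, f (shift k u) * pd g k u) =
      ∑ k ∈ Finset.Icc (-2 : ℤ) 2, g (shift k u) * pd f k u

/-- Right-hand side of (E10), the Itoh–Narita–Bogoyavlensky equation. -/
def fINB (u : ℤ → ℝ) : ℝ := u 0 * (u 2 + u 1 - u (-1) - u (-2))

/-- `S_0 = u_2 u_0 + u_1 u_0 + u_0² + u_0 u_{-1} + u_0 u_{-2}`. -/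
def SINB (u : ℤ → ℝ) : ℝ :=
  u 2 * u 0 + u 1 * u 0 + (u 0) ^ 2 + u 0 * u (-1) + u 0 * u (-2)

/-- Generalized symmetry of the INB equation: `g_0 = u_0 (S_2 + S_1 - S_{-1} - S_{-2})`. -/
def gINB (u : ℤ → ℝ) : ℝ :=
  u 0 * (SINB (shift 2 u) + SINB (shift 1 u) - SINB (shift (-1) u) - SINB (shift (-2) u))

/-- The partial derivative `∂u_j/∂u_k` is the Kronecker delta. -/
lemma hasDerivAt_update_coord (u : ℤ → ℝ) (j k : ℤ) :
    HasDerivAt (fun x => Function.update u k x j) (if j = k then 1 else 0) (u k) := by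
  by_cases h : j = k
  · subst h
    simpa using hasDerivAt_id' (u j)
  · simpa [h] using hasDerivAt_const (u k) (u j)

lemma pd_fINB (u : ℤ → ℝ) (k : ℤ) :
    pd fINB k u =
      (if (0 : ℤ) = k then 1 else 0) * (u 2 + u 1 - u (-1) - u (-2)) +
        u 0 * ((if (2 : ℤ) = k then 1 else 0) + (if (1 : ℤ) = k then 1 else 0) -
          (if (-1 : ℤ) = k then 1 else 0) - (if (-2 : ℤ) = k then 1 else 0)) := by
  have d := fun j => hasDerivAt_update_coord u j k
  have h := ((d 0).fun_mul ((((d 2).fun_add (d 1)).fun_sub (d (-1))).fun_sub (d (-2)))).deriv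
  simp only [Function.update_eq_self] at h
  exact h

/-- The differential of `S_s` applied to the variation `v`. -/
def linSINB (u v : ℤ → ℝ) (s : ℤ) : ℝ :=
  v s * (u (s + 2) + u (s + 1) + u s + u (s - 1) + u (s - 2)) +
    u s * (v (s + 2) + v (s + 1) + v s + v (s - 1) + v (s - 2))

lemma SINB_shift (u : ℤ → ℝ) (s : ℤ) :
    SINB (shift s u) = u s * (u (s + 2) + u (s + 1) + u s + u (s - 1) + u (s - 2)) := by
  have h1 : (-1 : ℤ) + s = s - 1 := by ring
  have h2 : (-2 : ℤ) + s = s - 2 := by ring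
  simp only [SINB, shift, h1, h2, zero_add, add_comm (2 : ℤ) s, add_comm (1 : ℤ) s]
  ring

lemma hasDerivAt_SINB_shift (u : ℤ → ℝ) (s k : ℤ) :
    HasDerivAt (fun x => SINB (shift s (Function.update u k x)))
      (linSINB u (fun j => if j = k then 1 else 0) s) (u k) := by
  have d := fun j => hasDerivAt_update_coord u j k
  have h := (d s).fun_mul (((((d (s + 2)).fun_add (d (s + 1))).fun_add (d s)).fun_add (d (s - 1))).fun_add (d (s - 2)))
  simp only [SINB_shift]
  simpa only [linSINB, Function.update_eq_self] using h

lemma pd_gINB (u : ℤ → ℝ) (k : ℤ) :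
    pd gINB k u =
      (if (0 : ℤ) = k then 1 else 0) *
          (SINB (shift 2 u) + SINB (shift 1 u) - SINB (shift (-1) u) - SINB (shift (-2) u)) +
        u 0 * (linSINB u (fun j => if j = k then 1 else 0) 2 +
          linSINB u (fun j => if j = k then 1 else 0) 1 -
          linSINB u (fun j => if j = k then 1 else 0) (-1) -
          linSINB u (fun j => if j = k then 1 else 0) (-2)) := by
  have d := fun s => hasDerivAt_SINB_shift u s k
  have h := ((hasDerivAt_update_coord u 0 k).fun_mul
    ((((d 2).fun_add (d 1)).fun_sub (d (-1))).fun_sub (d (-2)))).deriv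
  simp only [Function.update_eq_self] at h
  exact h

/-- the flow `gINB` is a generalized symmetry of the INB
equation (E10). -/
theorem INB_gen_symmetry : IsGenSymmetry fINB gINB (fun _ => True) := by
  intro u _
  have h4 : Finset.Icc (-4 : ℤ) 4 = {-4, -3, -2, -1, 0, 1, 2, 3, 4} := by decide
  have h2 : Finset.Icc (-2 : ℤ) 2 = {-2, -1, 0, 1, 2} := by decide
  rw [h4, h2]
  simp only [pd_fINB, pd_gINB]
  norm_num [fINB, gINB, SINB, linSINB, shift]
  ring
end
end
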